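/- Z is a minimal set satisfying the graphical adjustment criterion for A,Y,L,N in G (it satisfies the criterion and no proper subset of it does) if and only if Z is a minimal A–Y cut in H^1 (an A–Y cut no proper subset of which is an A–Y cut). -/

import Mathlib

open Relation Set

namespace CausalGraph

variable {V : Type*} [Fintype V] [DecidableEq V]

/-- `p` is a path in the undirected sense from `u` to `v` along adjacency `Adj`:
a nonempty list of pairwise distinct vertices, consecutive ones adjacent,
starting at `u` and ending at `v`. -/
def IsPath (Adj : V → V → Prop) (u v : V) (p : List V) : Prop :=
  List.Chain' Adj p ∧ p.head? = some u ∧ p.getLast? = some v ∧ p.Nodup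

/-- Ancestors of `S` in the digraph `D` (every vertex is an ancestor of itself). -/
def anc (D : V → V → Prop) (S : Set V) : Set V :=
  {u | ∃ v ∈ S, Relation.ReflTransGen D u v}

/-- Descendants of `S` in the digraph `D` (every vertex is a descendant of itself). -/
def desc (D : V → V → Prop) (S : Set V) : Set V :=
  {u | ∃ v ∈ S, Relation.ReflTransGen D v u}

/-- Parents of vertices of `S` in the digraph `D`. -/
def parents (D : V → V → Prop) (S : Set V) : Set V :=
  {u | ∃ v ∈ S, D u v}

/-- The digraph `D` is acyclic. -/
def Acyclic (D : V → V → Prop) : Prop :=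
  ∀ u v, D u v → ¬ Relation.ReflTransGen D v u

/-- Vertices other than `A` lying on a directed path from `A` to `Y`. -/
def cn (D : V → V → Prop) (A Y : V) : Set V :=
  {v | v ≠ A ∧ Relation.ReflTransGen D A v ∧ Relation.ReflTransGen D v Y}

/-- The forbidden set. -/
def forb (D : V → V → Prop) (A Y : V) : Set V :=
  desc D (cn D A Y) ∪ {A}

/-- Proper back-door graph: delete every edge from `A` into `cn D A Y`. -/
def pbd (D : V → V → Prop) (A Y : V) : V → V → Prop :=
  fun u v => D u v ∧ ¬(u = A ∧ v ∈ cn D A Y)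

/-- `y` is an interior vertex of the list `p` with neighbours `x` and `z` on the path. -/
def InteriorAt (p : List V) (x y z : V) : Prop :=
  ∃ s t : List V, p = s ++ x :: y :: z :: t

/-- The path `p` is blocked by `Z` in the digraph `D`: some interior non-collider
lies in `Z`, or some interior collider has no descendant in `Z`. -/
def Blocked (D : V → V → Prop) (Z : Set V) (p : List V) : Prop :=
  (∃ x y z, InteriorAt p x y z ∧ ¬(D x y ∧ D z y) ∧ y ∈ Z) ∨
  (∃ x y z, InteriorAt p x y z ∧ (D x y ∧ D z y) ∧ ∀ d ∈ desc D {y}, d ∉ Z)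

/-- d-separation of `S` and `T` given `Z` in the digraph `D`. -/
def DSep (D : V → V → Prop) (S T Z : Set V) : Prop :=
  ∀ s ∈ S, ∀ t ∈ T, ∀ p : List V,
    IsPath (fun a b => D a b ∨ D b a) s t p → Blocked D Z p

/-- Moral graph of the subgraph of the digraph `D` induced on `Vs`. -/
def moral (D : V → V → Prop) (Vs : Set V) : SimpleGraph V :=
  SimpleGraph.fromRel (fun u v =>
    u ∈ Vs ∧ v ∈ Vs ∧ (D u v ∨ D v u ∨ ∃ w ∈ Vs, D u w ∧ D v w))

/-- Separation in an undirected graph: every path from `S` to `T` meets `W`. -/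
def USep (H : SimpleGraph V) (S T W : Set V) : Prop :=
  ∀ s ∈ S, ∀ t ∈ T, ∀ p : List V, IsPath H.Adj s t p → ∃ z ∈ W, z ∈ p

/-- `Z` is an `A`–`Y` cut in an undirected graph `H` with vertex set `Vs`. -/
def IsCut (Vs : Set V) (H : SimpleGraph V) (A Y : V) (Z : Set V) : Prop :=
  Z ⊆ Vs ∧ Z ∩ {A, Y} = ∅ ∧ ∀ p : List V, IsPath H.Adj A Y p → ∃ z ∈ Z, z ∈ p

def MinimalCut (Vs : Set V) (H : SimpleGraph V) (A Y : V) (Z : Set V) : Prop :=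
  IsCut Vs H A Y Z ∧ ∀ Z' ⊂ Z, ¬ IsCut Vs H A Y Z'

def MinimumCut (Vs : Set V) (H : SimpleGraph V) (A Y : V) (Z : Set V) : Prop :=
  IsCut Vs H A Y Z ∧ ∀ Z', IsCut Vs H A Y Z' → Z.ncard ≤ Z'.ncard

/-- Connected component of `y` in `H` restricted to the complement of `U`:
vertices reachable from `y` by paths avoiding `U`. -/
def cc (H : SimpleGraph V) (U : Set V) (y : V) : Set V :=
  {w | ∃ p : List V, IsPath H.Adj y w p ∧ ∀ x ∈ p, x ∉ U}

/-- Boundary of `S` in `H`: vertices outside `S` adjacent to some vertex of `S`. -/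
def bdry (H : SimpleGraph V) (S : Set V) : Set V :=
  {v | v ∉ S ∧ ∃ u ∈ S, H.Adj v u}

/-- The partial order `Z₁ ⊴_H Z₂` between `A`–`Y` cuts. -/
def TLE (H : SimpleGraph V) (A Y : V) (Z₁ Z₂ : Set V) : Prop :=
  USep H {Y} (Z₂ \ Z₁) Z₁ ∧ USep H {A} (Z₁ \ Z₂) Z₂

/-- Ancestors of `{A, Y} ∪ L`. -/
def ancAYL (D : V → V → Prop) (A Y : V) (L : Set V) : Set V :=
  anc D ({A, Y} ∪ L)

/-- The moral graph `H⁰` of the proper back-door graph induced on `an_G({A,Y} ∪ L)`. -/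
def H0 (D : V → V → Prop) (A Y : V) (L : Set V) : SimpleGraph V :=
  moral (pbd D A Y) (ancAYL D A Y L)

/-- The set of vertices removed from `H⁰` when constructing `H¹`. -/
def Ignore (D : V → V → Prop) (A Y : V) (L N : Set V) : Set V :=
  (ancAYL D A Y L \ {A, Y}) ∩ ((Set.univ \ N) ∪ forb D A Y)

/-- Vertex set of `H¹`. -/
def H1verts (D : V → V → Prop) (A Y : V) (L N : Set V) : Set V :=
  ancAYL D A Y L \ Ignore D A Y L N

/-- The non-parametric adjustment efficiency graph `H¹`: delete the vertices of
`Ignore`, join two remaining vertices if they are joined in `H⁰` by a path all of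
whose intermediate vertices are in `Ignore`, and join `A` and `Y` to every vertex
of `L`. -/
def H1 (D : V → V → Prop) (A Y : V) (L N : Set V) : SimpleGraph V :=
  SimpleGraph.fromRel (fun u v =>
    u ∈ H1verts D A Y L N ∧ v ∈ H1verts D A Y L N ∧
      ((∃ p : List V, IsPath (H0 D A Y L).Adj u v p ∧
          ∀ x ∈ p, x ≠ u → x ≠ v → x ∈ Ignore D A Y L N) ∨
        (u = A ∧ v ∈ L) ∨ (u = Y ∧ v ∈ L)))

/-- The graphical adjustment criterion for `A, Y, L, N` in the DAG `D`. -/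
def GAC (D : V → V → Prop) (A Y : V) (L N Z : Set V) : Prop :=
  DSep (pbd D A Y) {A} {Y} Z ∧ Z ∩ forb D A Y = ∅ ∧ L ⊆ Z ∧ Z ⊆ N

def MinimalGAC (D : V → V → Prop) (A Y : V) (L N Z : Set V) : Prop :=
  GAC D A Y L N Z ∧ ∀ Z' ⊂ Z, ¬ GAC D A Y L N Z'

def MinimumGAC (D : V → V → Prop) (A Y : V) (L N Z : Set V) : Prop :=
  GAC D A Y L N Z ∧ ∀ Z', GAC D A Y L N Z' → Z.ncard ≤ Z'.ncard

/-- Graphical admissibility of the pair `(L, N)`. -/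
def Admissible (D : V → V → Prop) (A Y : V) (L N : Set V) : Prop :=
  ∃ Z, GAC D A Y L N Z

end CausalGraph

namespace CausalGraph

/-!
A minimal set satisfying the adjustment criterion consists of ancestors of `{A, Y} ∪ L`: a walk from
`A` to `Y` that is not blocked by a set of such ancestors stays within them, so the other vertices
can be discarded. For a set of such ancestors containing `L`, d-separation in the proper back-door
graph is separation in the moral graph `H⁰`. Bypassing the vertices of `Ignore` does not change
which vertices are separated by a set disjoint from `Ignore`, and the edges `A – l – Y` of `H¹`
force a cut to contain every `l ∈ L`.
-/

section UndirectedSeparation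

variable {V : Type*} {H : SimpleGraph V} {I S T Vs Z : Set V} {A Y u v : V}

/-- The subgraph of `H` induced on `S`, with the vertices outside `S` kept as isolated vertices, so
that connectivity within `S` is reachability between vertices of `V`. -/
def inducedOn (H : SimpleGraph V) (S : Set V) : SimpleGraph V :=
  (H.induce S).spanningCoe

lemma inducedOn_adj : (inducedOn H S).Adj u v ↔ u ∈ S ∧ v ∈ S ∧ H.Adj u v := by
  simp [inducedOn, and_comm, and_left_comm]

lemma inducedOn_le : inducedOn H S ≤ H := H.spanningCoe_induce_le S

lemma inducedOn_mono (h : S ⊆ T) : inducedOn H S ≤ inducedOn H T := by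
  intro u v huv
  rw [inducedOn_adj] at huv ⊢
  exact ⟨h huv.1, h huv.2.1, huv.2.2⟩

lemma forall_mem_support_inducedOn (w : (inducedOn H S).Walk u v) (hu : u ∈ S) :
    ∀ x ∈ w.support, x ∈ S := by
  induction w with
  | nil => simpa using hu
  | cons h _ ih =>
    simpa using ⟨hu, ih (inducedOn_adj.1 h).2.1⟩

lemma exists_isPath_iff_reachable :
    (∃ p, IsPath H.Adj u v p ∧ ∀ x ∈ p, x ∈ S) ↔ u ∈ S ∧ (inducedOn H S).Reachable u v := by
  constructor
  · rintro ⟨p, ⟨hchain, hhead, hlast, -⟩, hS⟩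
    have hp : p ≠ [] := by rintro rfl; simp at hhead
    have hchain' : p.IsChain (inducedOn H S).Adj :=
      hchain.imp_of_mem_imp fun a b ha hb hab => inducedOn_adj.2 ⟨hS a ha, hS b hb, hab⟩
    rw [List.head?_eq_some_head hp, Option.some_inj] at hhead
    rw [List.getLast?_eq_some_getLast hp, Option.some_inj] at hlast
    subst hhead hlast
    exact ⟨hS _ (p.head_mem hp), ⟨.ofSupport p hp hchain'⟩⟩
  · rintro ⟨hu, huv⟩
    obtain ⟨w, hw⟩ := huv.exists_isPath
    refine ⟨w.support, ⟨?_, ?_, ?_, hw.support_nodup⟩, forall_mem_support_inducedOn w hu⟩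
    · exact w.isChain_adj_support.imp fun _ _ h => inducedOn_le h
    · rw [List.head?_eq_some_head w.support_ne_nil, w.head_support]
    · rw [List.getLast?_eq_some_getLast w.support_ne_nil, w.getLast_support]

lemma exists_isPath_through_iff_reachable :
    (∃ p, IsPath H.Adj u v p ∧ ∀ x ∈ p, x ≠ u → x ≠ v → x ∈ I) ↔
      (inducedOn H (I ∪ {u, v})).Reachable u v := by
  have h := exists_isPath_iff_reachable (H := H) (S := I ∪ {u, v}) (u := u) (v := v)
  simp only [mem_union, mem_insert_iff, mem_singleton_iff, true_or, or_true, true_and] at h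
  rw [← h]
  grind

lemma isCut_iff_not_reachable :
    IsCut Vs H A Y Z ↔
      (Z ⊆ Vs ∧ A ∉ Z ∧ Y ∉ Z) ∧ ¬ (inducedOn H Zᶜ).Reachable A Y := by
  have hcut : A ∉ Z → ((∀ p, IsPath H.Adj A Y p → ∃ z ∈ Z, z ∈ p) ↔
      ¬ (inducedOn H Zᶜ).Reachable A Y) := fun hA => by
    rw [← and_iff_right (a := A ∈ Zᶜ) (b := (inducedOn H Zᶜ).Reachable A Y) hA,
      ← exists_isPath_iff_reachable]
    simp only [mem_compl_iff]
    grind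
  have hZ : Z ∩ {A, Y} = ∅ ↔ A ∉ Z ∧ Y ∉ Z := by
    simp [← disjoint_iff_inter_eq_empty]
  rw [IsCut, hZ]
  grind

/-- The graph obtained from `H` by eliminating the vertices of `I`, joining the remaining vertices
that are linked in `H` by a path through `I`; the vertices of `I` become isolated. -/
def eliminate (H : SimpleGraph V) (I : Set V) : SimpleGraph V where
  Adj u v := u ≠ v ∧ u ∉ I ∧ v ∉ I ∧ (inducedOn H (I ∪ {u, v})).Reachable u v
  symm := ⟨fun u v ⟨hne, hu, hv, h⟩ => ⟨hne.symm, hv, hu, pair_comm u v ▸ h.symm⟩⟩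
  loopless := ⟨fun _ h => h.1 rfl⟩

lemma eliminate_adj :
    (eliminate H I).Adj u v ↔
      u ≠ v ∧ u ∉ I ∧ v ∉ I ∧ (inducedOn H (I ∪ {u, v})).Reachable u v := Iff.rfl

-- `x` is the first vertex of `w` outside `I`.
lemma exists_reachable_eliminate (hv : v ∉ I) (hvZ : v ∉ Z) (w : (inducedOn H Zᶜ).Walk u v) :
    ∃ x ∉ I, x ∉ Z ∧ u ∈ I ∪ {x} ∧ (inducedOn H (I ∪ {x})).Reachable u x ∧
      (inducedOn (eliminate H I) Zᶜ).Reachable x v := by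
  induction w with
  | nil => exact ⟨_, hv, hvZ, .inr rfl, .rfl, .rfl⟩
  | @cons u b v hub _ ih =>
    obtain ⟨x, hx, hxZ, hb, hbx, hxv⟩ := ih hv hvZ
    obtain ⟨huZ, -, hub⟩ := inducedOn_adj.1 hub
    have hux {J : Set V} (hu : u ∈ J) (hJ : I ∪ {x} ⊆ J) : (inducedOn H J).Reachable u x :=
      (inducedOn_adj.2 ⟨hu, hJ hb, hub⟩).reachable.trans (hbx.mono (inducedOn_mono hJ))
    by_cases hu : u ∈ I
    · exact ⟨x, hx, hxZ, .inl hu, hux (.inl hu) le_rfl, hxv⟩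
    refine ⟨u, hu, huZ, .inr rfl, .rfl, ?_⟩
    obtain rfl | hne := eq_or_ne u x
    · exact hxv
    · have hadj : (eliminate H I).Adj u x :=
        ⟨hne, hu, hx, hux (by simp) (union_subset_union_right I (by simp))⟩
      exact (inducedOn_adj.2 ⟨huZ, hxZ, hadj⟩).reachable.trans hxv

lemma reachable_eliminate_iff (hZ : Disjoint Z I) (hu : u ∉ I) (hv : v ∉ I) (hvZ : v ∉ Z) :
    (inducedOn (eliminate H I) Zᶜ).Reachable u v ↔ (inducedOn H Zᶜ).Reachable u v := by
  constructor
  · rintro ⟨w⟩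
    induction w with
    | nil => rfl
    | cons h _ ih =>
      obtain ⟨huZ, hbZ, -, -, hb, hub⟩ := inducedOn_adj.1 h
      refine (hub.mono (inducedOn_mono ?_)).trans (ih hb hv hvZ)
      rintro x (hx | rfl | rfl)
      exacts [hZ.subset_compl_left hx, huZ, hbZ]
  · rintro ⟨w⟩
    obtain ⟨x, -, -, hux, -, hxv⟩ := exists_reachable_eliminate hv hvZ w
    obtain rfl : u = x := hux.resolve_left hu
    exact hxv

end UndirectedSeparation

section DConnection

variable {V : Type*} {D : V → V → Prop} {S T U Z : Set V} {u v x y z : V}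
  {l m p q s t : List V}

lemma subset_anc : S ⊆ anc D S := fun u hu => ⟨u, hu, .refl⟩

lemma anc_mono (h : S ⊆ T) : anc D S ⊆ anc D T := fun _ ⟨v, hv, huv⟩ => ⟨v, h hv, huv⟩

lemma anc_union : anc D (S ∪ T) = anc D S ∪ anc D T := by
  ext u
  simp only [anc, mem_union, mem_ofPred_eq, or_and_right, exists_or]

lemma mem_anc_of_reflTransGen (huv : ReflTransGen D u v) (hv : v ∈ anc D S) : u ∈ anc D S := by
  obtain ⟨w, hw, hvw⟩ := hv
  exact ⟨w, hw, huv.trans hvw⟩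

lemma mem_anc_of_adj (huv : D u v) (hv : v ∈ anc D S) : u ∈ anc D S :=
  mem_anc_of_reflTransGen (.single huv) hv

lemma anc_subset_anc (h : S ⊆ anc D T) : anc D S ⊆ anc D T := by
  rintro u ⟨v, hv, huv⟩
  exact mem_anc_of_reflTransGen huv (h hv)

/-- `Z` does not block a path at the vertex `y`, whose neighbours on the path are `x` and `z`. -/
def ActiveAt (D : V → V → Prop) (Z : Set V) (x y z : V) : Prop :=
  (D x y ∧ D z y → y ∈ anc D Z) ∧ (¬(D x y ∧ D z y) → y ∉ Z)

lemma not_blocked_iff_activeAt :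
    ¬ Blocked D Z p ↔ ∀ x y z, InteriorAt p x y z → ActiveAt D Z x y z := by
  simp only [Blocked, ActiveAt, anc, desc, mem_ofPred_eq, mem_singleton_iff, exists_eq_left]
  grind

lemma interiorAt_iff_infix : InteriorAt p x y z ↔ [x, y, z] <:+: p := by
  simp only [InteriorAt, List.IsInfix, List.append_assoc, List.cons_append, List.nil_append,
    eq_comm]

/-- A walk in the skeleton of `D`, possibly with repeated vertices, that is not blocked by `Z`. -/
def ActiveWalk (D : V → V → Prop) (Z : Set V) (p : List V) : Prop :=
  p.IsChain (fun a b => D a b ∨ D b a) ∧ ¬ Blocked D Z p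

lemma activeWalk_singleton : ActiveWalk D Z [x] := by
  refine ⟨.singleton x, not_blocked_iff_activeAt.2 ?_⟩
  rintro a b c ⟨s, t, h⟩
  have := congrArg List.length h
  grind

lemma activeWalk_cons_cons :
    ActiveWalk D Z (x :: y :: l) ↔
      (D x y ∨ D y x) ∧ (∀ z ∈ l.head?, ActiveAt D Z x y z) ∧ ActiveWalk D Z (y :: l) := by
  simp only [ActiveWalk, not_blocked_iff_activeAt, interiorAt_iff_infix, List.isChain_cons_cons,
    List.infix_cons_iff (a := x)]
  cases l <;> simp only [List.cons_prefix_cons] <;> grind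

lemma ActiveWalk.activeAt (h : ActiveWalk D Z p) (hp : [x, y, z] <:+: p) : ActiveAt D Z x y z :=
  not_blocked_iff_activeAt.1 h.2 x y z (interiorAt_iff_infix.2 hp)

lemma ActiveWalk.infix (h : ActiveWalk D Z p) (hq : q <:+: p) : ActiveWalk D Z q := by
  refine ⟨h.1.infix hq, not_blocked_iff_activeAt.2 fun x y z hxyz => ?_⟩
  exact h.activeAt ((interiorAt_iff_infix.1 hxyz).trans hq)

lemma ActiveWalk.append (hs : ActiveWalk D Z (s ++ [y])) (ht : ActiveWalk D Z (y :: t))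
    (hy : ∀ x ∈ s.getLast?, ∀ z ∈ t.head?, ActiveAt D Z x y z) :
    ActiveWalk D Z (s ++ y :: t) := by
  induction s with
  | nil => exact ht
  | cons a s ih =>
    cases s with
    | nil =>
      exact activeWalk_cons_cons.2 ⟨(activeWalk_cons_cons.1 hs).1, hy a rfl, ht⟩
    | cons b s =>
      obtain ⟨hab, hb, hs⟩ := activeWalk_cons_cons.1 hs
      refine activeWalk_cons_cons.2 ⟨hab, fun z hz => hb z ?_, ih hs ?_⟩
      · cases s <;> exact hz
      · simpa only [List.getLast?_cons_cons] using hy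

-- Follow the walk until its first collider, which has a descendant in `Z`.
lemma ActiveWalk.mem_anc_or_isChain (h : ActiveWalk D Z (x :: y :: l)) (hxy : D x y) :
    y ∈ anc D Z ∨ (x :: y :: l).IsChain D := by
  induction l generalizing x y with
  | nil => exact .inr (by simpa using hxy)
  | cons z l ih =>
    obtain ⟨-, hy, h⟩ := activeWalk_cons_cons.1 h
    by_cases hzy : D z y
    · exact .inl ((hy z rfl).1 ⟨hxy, hzy⟩)
    · have hyz : D y z := (activeWalk_cons_cons.1 h).1.resolve_right hzy
      exact (ih h hyz).imp (mem_anc_of_adj hyz) (List.isChain_cons_cons.2 ⟨hxy, ·⟩)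

lemma ActiveWalk.forall_mem_anc (h : ActiveWalk D Z (u :: l)) (hZ : Z ⊆ anc D U)
    (hu : u ∈ anc D U) (hv : ∀ v ∈ (u :: l).getLast?, v ∈ anc D U) :
    ∀ y ∈ u :: l, y ∈ anc D U := by
  induction l generalizing u with
  | nil => simpa using hu
  | cons y l ih =>
    have hy : y ∈ anc D U := by
      obtain ⟨huy | hyu, -, -⟩ := activeWalk_cons_cons.1 h
      · rcases h.mem_anc_or_isChain huy with hy | hchain
        · exact anc_subset_anc hZ hy
        · have hlast := List.getLast?_eq_some_getLast (List.cons_ne_nil y l)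
          exact mem_anc_of_reflTransGen
            (List.relationReflTransGen_of_exists_isChain_cons l hchain.tail rfl)
            (hv _ (by simpa using hlast))
      · exact mem_anc_of_adj hyu hu
    have htail := ih (activeWalk_cons_cons.1 h).2.2 hy (by simpa using hv)
    exact List.forall_mem_cons.2 ⟨hu, htail⟩

lemma exists_eq_append_of_not_nodup (h : ¬ p.Nodup) : ∃ s v m t, p = s ++ v :: (m ++ v :: t) := by
  obtain ⟨v, hv⟩ : ∃ v, [v, v].Sublist p := by simpa [List.nodup_iff_sublist] using h
  obtain ⟨r₁, r₂, rfl, hv₁, hv₂⟩ := List.cons_sublist_iff.1 hv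
  obtain ⟨s, m₁, rfl⟩ := List.append_of_mem hv₁
  obtain ⟨m₂, t, rfl⟩ := List.append_of_mem (List.singleton_sublist.1 hv₂)
  exact ⟨s, v, m₁ ++ m₂, t, by simp⟩

-- The loop leaves `v` and is not directed back into `v`, so it meets a collider below `v`.
lemma ActiveWalk.mem_anc_of_loop (h : ActiveWalk D Z (v :: (m ++ [v])))
    (hfst : ∀ a ∈ (m ++ [v]).head?, ¬ D a v) (hlst : ∀ b ∈ (v :: m).getLast?, ¬ D b v) :
    v ∈ anc D Z := by
  obtain ⟨a, l, hal⟩ := List.exists_cons_of_ne_nil (List.concat_ne_nil v m)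
  rw [hal] at h hfst
  have hva : D v a := (activeWalk_cons_cons.1 h).1.resolve_right (hfst a rfl)
  rcases h.mem_anc_or_isChain hva with ha | hchain
  · exact mem_anc_of_adj hva ha
  · rw [← hal, ← List.cons_append, List.isChain_append] at hchain
    have hb := List.getLast?_eq_some_getLast (List.cons_ne_nil v m)
    exact absurd (hchain.2.2 _ hb v rfl) (hlst _ hb)

lemma ActiveWalk.remove_loop (h : ActiveWalk D Z (s ++ v :: (m ++ v :: t))) :
    ActiveWalk D Z (s ++ v :: t) := by
  have hloop : ActiveWalk D Z (v :: (m ++ [v])) := h.infix ⟨s, t, by simp⟩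
  refine (h.infix ⟨[], m ++ v :: t, by simp⟩).append (h.infix ⟨s ++ v :: m, [], by simp⟩)
    fun x hx z hz => ?_
  obtain ⟨s, rfl⟩ := List.getLast?_eq_some_iff.1 hx
  obtain ⟨t, rfl⟩ := List.head?_eq_some_iff.1 hz
  obtain ⟨a, ha⟩ : ∃ a, a ∈ (m ++ [v]).head? := ⟨_, List.head?_eq_some_head (by simp)⟩
  obtain ⟨b, hb⟩ : ∃ b, b ∈ (v :: m).getLast? := ⟨_, List.getLast?_eq_some_getLast (by simp)⟩
  have hout : ActiveAt D Z x v a := by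
    obtain ⟨l, hl⟩ := List.head?_eq_some_iff.1 ha
    exact h.activeAt ⟨s, l ++ z :: t, by simpa using congrArg (· ++ z :: t) hl.symm⟩
  have hin : ActiveAt D Z b v z := by
    obtain ⟨l, hl⟩ := List.getLast?_eq_some_iff.1 hb
    exact h.activeAt ⟨s ++ x :: l, t, by
      simpa using congrArg (· ++ v :: z :: t) hl.symm⟩
  refine ⟨fun ⟨hxv, hzv⟩ => ?_, fun hncol => ?_⟩
  · by_cases hav : D a v
    · exact hout.1 ⟨hxv, hav⟩
    by_cases hbv : D b v
    · exact hin.1 ⟨hbv, hzv⟩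
    · refine hloop.mem_anc_of_loop ?_ ?_ <;> grind
  · by_cases hxv : D x v
    · exact hin.2 fun hcol => hncol ⟨hxv, hcol.2⟩
    · exact hout.2 fun hcol => hxv hcol.1

lemma ActiveWalk.exists_nodup (h : ActiveWalk D Z p) :
    ∃ q, ActiveWalk D Z q ∧ q.Nodup ∧ q.head? = p.head? ∧ q.getLast? = p.getLast? := by
  induction hn : p.length using Nat.strong_induction_on generalizing p with
  | _ n ih =>
    by_cases hp : p.Nodup
    · exact ⟨p, h, hp, rfl, rfl⟩
    · obtain ⟨s, v, m, t, rfl⟩ := exists_eq_append_of_not_nodup hp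
      obtain ⟨q, hq, hqn, hhead, hlast⟩ := ih _ (by simp [← hn]) h.remove_loop rfl
      refine ⟨q, hq, hqn, hhead.trans ?_, hlast.trans ?_⟩
      · cases s <;> rfl
      · simp [List.getLast?_append, List.getLast?_cons]

/-- `u` and `v` are d-connected given `Z`: some walk between them, which unlike the paths in `DSep`
may repeat vertices, is not blocked by `Z`. -/
def DConnected (D : V → V → Prop) (Z : Set V) (u v : V) : Prop :=
  ∃ l, ActiveWalk D Z (u :: l) ∧ (u :: l).getLast? = some v

lemma dSep_iff_not_dConnected :
    DSep D S T Z ↔ ∀ u ∈ S, ∀ v ∈ T, ¬ DConnected D Z u v := by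
  refine forall₄_congr fun u _ v _ => ⟨?_, fun h p hp => ?_⟩
  · rintro h ⟨l, hl, hlast⟩
    obtain ⟨q, hq, hqn, hqhead, hqlast⟩ := hl.exists_nodup
    exact hq.2 (h q ⟨hq.1, hqhead, hqlast.trans hlast, hqn⟩)
  · by_contra hblocked
    obtain ⟨hchain, hhead, hlast, -⟩ := hp
    obtain ⟨l, rfl⟩ := List.head?_eq_some_iff.1 hhead
    exact h ⟨l, ⟨hchain, hblocked⟩, hlast⟩

lemma DSep.inter_anc (h : DSep D S T Z) (hS : S ⊆ U) (hT : T ⊆ U) :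
    DSep D S T (Z ∩ anc D U) := by
  rw [dSep_iff_not_dConnected] at h ⊢
  rintro u hu v hv ⟨l, hl, hlast⟩
  have hanc := hl.forall_mem_anc inter_subset_right (subset_anc (hS hu))
    (by simpa [hlast] using subset_anc (hT hv))
  refine h u hu v hv ⟨l, ⟨hl.1, not_blocked_iff_activeAt.2 fun x y z hxyz => ?_⟩, hlast⟩
  have hy : y ∈ anc D U := by
    obtain ⟨s, t, hst⟩ := hxyz
    exact hanc y (by simp [hst])
  obtain ⟨hcol, hncol⟩ := not_blocked_iff_activeAt.1 hl.2 x y z hxyz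
  exact ⟨fun hc => anc_mono inter_subset_left (hcol hc), fun hc hyZ => hncol hc ⟨hyZ, hy⟩⟩

end DConnection

section Moralization

variable {V : Type*} {D : V → V → Prop} {S T Z : Set V} {s u v x y z : V} {l : List V}

lemma moral_adj : (moral D S).Adj u v ↔
    u ≠ v ∧ u ∈ S ∧ v ∈ S ∧ (D u v ∨ D v u ∨ ∃ w ∈ S, D u w ∧ D v w) := by
  simp only [moral, SimpleGraph.fromRel_adj]
  grind

lemma reachable_moral (hu : u ∈ S \ Z) (hv : v ∈ S \ Z)
    (h : D u v ∨ D v u ∨ ∃ w ∈ S, D u w ∧ D v w) :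
    (inducedOn (moral D S) Zᶜ).Reachable u v := by
  obtain rfl | hne := eq_or_ne u v
  · rfl
  · exact (inducedOn_adj.2 ⟨hu.2, hv.2, moral_adj.2 ⟨hne, hu.1, hv.1, h⟩⟩).reachable

lemma ActiveWalk.reachable_moral [Std.Asymm D] (hv : v ∉ Z) :
    ∀ {u l}, ActiveWalk D Z (u :: l) → u ∉ Z → (∀ y ∈ u :: l, y ∈ S) →
      (u :: l).getLast? = some v → (inducedOn (moral D S) Zᶜ).Reachable u v
  | u, [], _, _, _, hlast => by
    obtain rfl : u = v := by simpa using hlast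
    rfl
  | u, [y], h, hu, hS, hlast => by
    obtain rfl : y = v := by simpa using hlast
    have huy := (activeWalk_cons_cons.1 h).1
    exact CausalGraph.reachable_moral ⟨hS u (by simp), hu⟩ ⟨hS y (by simp), hv⟩ (by tauto)
  | u, y :: z :: l, h, hu, hS, hlast => by
    obtain ⟨huy, hy, htail⟩ := activeWalk_cons_cons.1 h
    obtain ⟨-, hz, htail'⟩ := activeWalk_cons_cons.1 htail
    by_cases hcol : D u y ∧ D z y
    · have hzZ : z ∉ Z := by
        cases l with
        | nil =>
          obtain rfl : z = v := by simpa using hlast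
          exact hv
        | cons w l => exact (hz w rfl).2 fun hcol' => asymm hcol.2 hcol'.1
      refine (CausalGraph.reachable_moral ⟨hS u (by simp), hu⟩ ⟨hS z (by simp), hzZ⟩
        (.inr (.inr ⟨y, hS y (by simp), hcol⟩))).trans ?_
      exact htail'.reachable_moral hv hzZ (fun w hw => hS w (by simp_all)) (by simpa using hlast)
    · have hyZ : y ∉ Z := (hy z rfl).2 hcol
      refine (CausalGraph.reachable_moral ⟨hS u (by simp), hu⟩ ⟨hS y (by simp), hyZ⟩
        (by tauto)).trans ?_
      exact htail.reachable_moral hv hyZ (fun w hw => hS w (by simp_all)) (by simpa using hlast)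

lemma exists_activeWalk_of_mem_anc [Std.Asymm D] (hyT : y ∈ anc D T) (hyZ : y ∉ anc D Z) :
    ∃ l, ActiveWalk D Z (y :: l) ∧ (∀ t ∈ (y :: l).getLast?, t ∈ T) ∧ ∀ x ∈ l.head?, D y x := by
  obtain ⟨t, ht, hyt⟩ := hyT
  induction hyt using ReflTransGen.head_induction_on with
  | refl => exact ⟨[], activeWalk_singleton, by simpa using ht, by simp⟩
  | @head c d hcd _ ih =>
    have hdZ : d ∉ anc D Z := mt (mem_anc_of_adj hcd) hyZ
    obtain ⟨l, hl, hlast, hhead⟩ := ih hdZ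
    refine ⟨d :: l, activeWalk_cons_cons.2 ⟨.inl hcd, fun x hx => ⟨?_, fun _ => ?_⟩, hl⟩,
      by simpa using hlast, by simpa using hcd⟩
    · exact fun hcol => absurd hcol.2 (asymm (hhead x hx))
    · exact mt (@subset_anc V D Z d) hdZ

lemma ActiveWalk.exists_of_reflTransGen [Std.Asymm D] (h : ActiveWalk D Z (y :: l))
    (hys : ReflTransGen D y s) (hyZ : y ∉ anc D Z) :
    ∃ l', ActiveWalk D Z (s :: l') ∧ (s :: l').getLast? = (y :: l).getLast? := by
  induction hys with
  | refl => exact ⟨l, h, rfl⟩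
  | @tail c d hyc hcd ih =>
    obtain ⟨l', hl', hlast⟩ := ih
    have hcZ : c ∉ Z := fun hc => hyZ ⟨c, hc, hyc⟩
    refine ⟨c :: l', activeWalk_cons_cons.2 ⟨.inr hcd, fun x _ => ⟨?_, fun _ => hcZ⟩, hl'⟩,
      by simpa using hlast⟩
    exact fun hcol => absurd hcol.1 (asymm hcd)

-- If `y` has no descendant in `Z`, then it is no ancestor of `S`, since the walk could otherwise be
-- prolonged to `S`; hence the walk may be replaced by a directed path from `y` to `T`.
lemma ActiveWalk.exists_cons [Std.Asymm D] (h : ActiveWalk D Z (y :: l))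
    (hsep : DSep D S T Z) (hy : y ∈ anc D (S ∪ T ∪ Z)) (hlast : ∀ t ∈ (y :: l).getLast?, t ∈ T)
    (hzy : D z y ∨ D y z) (hyZ : y ∈ Z → D z y ∧ ∀ x ∈ l.head?, D x y) :
    ∃ l', ActiveWalk D Z (z :: y :: l') ∧ ∀ t ∈ (z :: y :: l').getLast?, t ∈ T := by
  by_cases hyanc : y ∈ anc D Z
  · refine ⟨l, activeWalk_cons_cons.2 ⟨hzy, fun x hx => ⟨fun _ => hyanc, fun hncol hy => ?_⟩, h⟩,
      by simpa using hlast⟩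
    exact hncol ⟨(hyZ hy).1, (hyZ hy).2 x hx⟩
  have hyS : y ∉ anc D S := by
    rintro ⟨s, hs, hys⟩
    obtain ⟨l', hl', hlast'⟩ := h.exists_of_reflTransGen hys hyanc
    have ht := List.getLast?_eq_some_getLast (List.cons_ne_nil s l')
    exact dSep_iff_not_dConnected.1 hsep s hs _ (hlast _ (hlast' ▸ ht)) ⟨l', hl', ht⟩
  have hyT : y ∈ anc D T := by simpa [anc_union, hyS, hyanc] using hy
  obtain ⟨l', hl', hlast', hhead⟩ := exists_activeWalk_of_mem_anc hyT hyanc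
  refine ⟨l', activeWalk_cons_cons.2 ⟨hzy, fun x hx => ⟨?_, fun _ => ?_⟩, hl'⟩,
    by simpa using hlast'⟩
  · exact fun hcol => absurd hcol.2 (asymm (hhead x hx))
  · exact mt (@subset_anc V D Z y) hyanc

lemma DSep.exists_activeWalk_of_walk_moral [Std.Asymm D] (hsep : DSep D S T Z) (hv : v ∈ T)
    (w : (inducedOn (moral D (anc D (S ∪ T ∪ Z))) Zᶜ).Walk u v) :
    ∃ l, ActiveWalk D Z (u :: l) ∧ ∀ t ∈ (u :: l).getLast?, t ∈ T := by
  induction w with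
  | nil => exact ⟨[], activeWalk_singleton, by simpa using hv⟩
  | cons hub _ ih =>
    obtain ⟨l, hl, hlast⟩ := ih hv
    obtain ⟨-, hbZ, hub⟩ := inducedOn_adj.1 hub
    obtain ⟨-, -, hb, hub | hbu | ⟨c, hc, huc, hbc⟩⟩ := moral_adj.1 hub
    · obtain ⟨l', hl'⟩ := hl.exists_cons hsep hb hlast (.inl hub) (absurd · hbZ)
      exact ⟨_, hl'⟩
    · obtain ⟨l', hl'⟩ := hl.exists_cons hsep hb hlast (.inr hbu) (absurd · hbZ)
      exact ⟨_, hl'⟩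
    · obtain ⟨l', hl', hlast'⟩ := hl.exists_cons hsep hb hlast (.inr hbc) (absurd · hbZ)
      obtain ⟨l'', hl''⟩ := hl'.exists_cons hsep hc hlast' (.inl huc)
        fun _ => ⟨huc, by simpa using hbc⟩
      exact ⟨_, hl''⟩

theorem dSep_iff_not_reachable_moral [Std.Asymm D] (hS : Disjoint S Z) (hT : Disjoint T Z) :
    DSep D S T Z ↔ ∀ u ∈ S, ∀ v ∈ T,
      ¬ (inducedOn (moral D (anc D (S ∪ T ∪ Z))) Zᶜ).Reachable u v := by
  constructor
  · rintro h u hu v hv ⟨w⟩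
    obtain ⟨l, hl, hlast⟩ := h.exists_activeWalk_of_walk_moral hv w
    have ht := List.getLast?_eq_some_getLast (List.cons_ne_nil u l)
    exact dSep_iff_not_dConnected.1 h u hu _ (hlast _ ht) ⟨l, hl, ht⟩
  · refine fun h => dSep_iff_not_dConnected.2 ?_
    rintro u hu v hv ⟨l, hl, hlast⟩
    have hanc := hl.forall_mem_anc (subset_union_right.trans subset_anc)
      (subset_anc (mem_union_left Z (mem_union_left T hu)))
      (by simpa [hlast] using subset_anc (mem_union_left Z (mem_union_right S hv)))
    exact h u hu v hv
      (hl.reachable_moral (hT.notMem_of_mem_left hv) (hS.notMem_of_mem_left hu) hanc hlast)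

end Moralization

section AdjustmentCriterion

variable {V : Type*} {D : V → V → Prop} {A Y : V} {L N S Z : Set V} {u v : V}

lemma Acyclic.asymm (h : Acyclic D) : Std.Asymm D :=
  ⟨fun u v huv hvu => h u v huv (.single hvu)⟩

instance [Std.Asymm D] : Std.Asymm (pbd D A Y) := ⟨fun _ _ h h' => asymm h.1 h'.1⟩

lemma left_mem_forb : A ∈ forb D A Y := .inr rfl

lemma right_mem_forb (h : ReflTransGen D A Y) : Y ∈ forb D A Y := by
  by_cases hYA : Y = A
  · exact .inr hYA
  · exact .inl ⟨Y, ⟨hYA, h, .refl⟩, .refl⟩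

lemma forb_subset_desc : forb D A Y ⊆ desc D {A} := by
  rintro v (⟨w, ⟨-, hAw, -⟩, hwv⟩ | rfl)
  · exact ⟨A, rfl, hAw.trans hwv⟩
  · exact ⟨_, rfl, .refl⟩

lemma anc_pbd (hA : A ∈ S) : anc (pbd D A Y) S = anc D S := by
  refine subset_antisymm
    (fun u ⟨v, hv, huv⟩ => ⟨v, hv, ReflTransGen.mono (fun _ _ h => h.1) u v huv⟩) ?_
  rintro u ⟨v, hv, huv⟩
  induction huv using ReflTransGen.head_induction_on with
  | refl => exact subset_anc hv
  | @head c d hcd _ ih =>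
    by_cases hc : c = A
    · exact subset_anc (hc ▸ hA)
    · exact mem_anc_of_adj ⟨hcd, fun h => hc h.1⟩ ih

lemma dSep_pbd_iff_not_reachable_H0 [Std.Asymm D] (hL : L ⊆ Z) (hZ : Z ⊆ ancAYL D A Y L)
    (hA : A ∉ Z) (hY : Y ∉ Z) :
    DSep (pbd D A Y) {A} {Y} Z ↔ ¬ (inducedOn (H0 D A Y L) Zᶜ).Reachable A Y := by
  have hanc : anc (pbd D A Y) ({A} ∪ {Y} ∪ Z) = ancAYL D A Y L := by
    rw [anc_pbd (by simp), singleton_union]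
    exact subset_antisymm
      (anc_subset_anc (union_subset (subset_union_left.trans subset_anc) hZ))
      (anc_mono (union_subset_union_right _ hL))
  rw [dSep_iff_not_reachable_moral (by simpa) (by simpa), hanc]
  simp only [mem_singleton_iff, forall_eq, H0]

lemma GAC.inter_ancAYL (h : GAC D A Y L N Z) : GAC D A Y L N (Z ∩ ancAYL D A Y L) := by
  obtain ⟨hsep, hforb, hL, hN⟩ := h
  have hanc : anc (pbd D A Y) ({A, Y} ∪ L) = ancAYL D A Y L := anc_pbd (by simp)
  refine ⟨hanc ▸ hsep.inter_anc (by simp) (by simp), ?_,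
    subset_inter hL (subset_union_right.trans subset_anc), inter_subset_left.trans hN⟩
  exact subset_empty_iff.1 (hforb ▸ inter_subset_inter_left _ inter_subset_left)

lemma subset_H1verts_iff (hAY : ReflTransGen D A Y) (hZ : Z ⊆ ancAYL D A Y L) :
    Z ⊆ H1verts D A Y L N ∧ A ∉ Z ∧ Y ∉ Z ↔ Z ∩ forb D A Y = ∅ ∧ Z ⊆ N := by
  have hA : A ∈ forb D A Y := left_mem_forb
  have hY : Y ∈ forb D A Y := right_mem_forb hAY
  have hmem (z : V) (hz : z ∈ Z) :
      z ∈ H1verts D A Y L N ∧ z ≠ A ∧ z ≠ Y ↔ z ∉ forb D A Y ∧ z ∈ N := by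
    have := hZ hz
    simp only [H1verts, Ignore, mem_sdiff, mem_inter_iff, mem_union, mem_insert_iff,
      mem_singleton_iff, mem_univ, true_and]
    grind
  rw [← disjoint_iff_inter_eq_empty, disjoint_left]
  grind

lemma mem_of_reachable_inducedOn_moral (h : (inducedOn (moral D S) Z).Reachable u v)
    (hne : u ≠ v) : u ∈ S := by
  obtain ⟨w⟩ := h
  cases w with
  | nil => exact absurd rfl hne
  | cons hub _ => exact (moral_adj.1 (inducedOn_le hub)).2.1

lemma H1_adj : (H1 D A Y L N).Adj u v ↔
    (eliminate (H0 D A Y L) (Ignore D A Y L N)).Adj u v ∨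
      u ≠ v ∧ u ∈ H1verts D A Y L N ∧ v ∈ H1verts D A Y L N ∧
        (u ∈ ({A, Y} : Set V) ∧ v ∈ L ∨ v ∈ ({A, Y} : Set V) ∧ u ∈ L) := by
  have hverts : (eliminate (H0 D A Y L) (Ignore D A Y L N)).Adj u v →
      u ∈ H1verts D A Y L N ∧ v ∈ H1verts D A Y L N := fun ⟨hne, hu, hv, huv⟩ =>
    ⟨⟨mem_of_reachable_inducedOn_moral huv hne, hu⟩,
      ⟨mem_of_reachable_inducedOn_moral huv.symm hne.symm, hv⟩⟩
  have hcomm := (inducedOn (H0 D A Y L) (Ignore D A Y L N ∪ {u, v})).reachable_comm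
    (u := u) (v := v)
  simp only [H1, SimpleGraph.fromRel_adj, exists_isPath_through_iff_reachable, pair_comm v u]
  simp only [eliminate_adj] at hverts ⊢
  grind [H1verts]

lemma inducedOn_H1_eq (hL : L ⊆ Z) :
    inducedOn (H1 D A Y L N) Zᶜ =
      inducedOn (eliminate (H0 D A Y L) (Ignore D A Y L N)) Zᶜ := by
  ext u v
  simp only [inducedOn_adj, H1_adj, mem_compl_iff]
  grind

lemma pair_subset_H1verts : {A, Y} ⊆ H1verts D A Y L N :=
  fun _ h => ⟨subset_anc (.inl h), fun hI => hI.1.2 h⟩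

lemma subset_of_not_reachable_H1 (hL : L ⊆ H1verts D A Y L N) (hA : A ∉ L ∪ Z) (hY : Y ∉ L ∪ Z)
    (h : ¬ (inducedOn (H1 D A Y L N) Zᶜ).Reachable A Y) : L ⊆ Z := by
  intro l hl
  by_contra hlZ
  have hadj {b : V} (hb : b ∈ ({A, Y} : Set V)) (hbLZ : b ∉ L ∪ Z) :
      (inducedOn (H1 D A Y L N) Zᶜ).Adj b l := by
    have hbl : b ≠ l := fun h => hbLZ (.inl (h ▸ hl))
    exact inducedOn_adj.2 ⟨fun hbZ => hbLZ (.inr hbZ), hlZ,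
      H1_adj.2 (.inr ⟨hbl, pair_subset_H1verts hb, hL hl, .inl ⟨hb, hl⟩⟩)⟩
  exact h ((hadj (.inl rfl) hA).reachable.trans (hadj (.inr rfl) hY).symm.reachable)

lemma isCut_H1_iff_gAC [Std.Asymm D] (hAY : ReflTransGen D A Y) (hLforb : L ∩ forb D A Y = ∅)
    (hLN : L ⊆ N) (hZ : Z ⊆ ancAYL D A Y L) :
    IsCut (H1verts D A Y L N) (H1 D A Y L N) A Y Z ↔ GAC D A Y L N Z := by
  suffices hsep : Z ∩ forb D A Y = ∅ → Z ⊆ N →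
      (¬ (inducedOn (H1 D A Y L N) Zᶜ).Reachable A Y ↔ L ⊆ Z ∧ DSep (pbd D A Y) {A} {Y} Z) by
    rw [isCut_iff_not_reachable, subset_H1verts_iff hAY hZ, GAC]
    exact ⟨fun ⟨⟨hf, hN⟩, h⟩ => ⟨((hsep hf hN).1 h).2, hf, ((hsep hf hN).1 h).1, hN⟩,
      fun ⟨hd, hf, hL, hN⟩ => ⟨⟨hf, hN⟩, (hsep hf hN).2 ⟨hL, hd⟩⟩⟩
  intro hZforb hZN
  obtain ⟨hLV, hAL, hYL⟩ := (subset_H1verts_iff (N := N) hAY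
    (subset_union_right.trans subset_anc)).2 ⟨hLforb, hLN⟩
  obtain ⟨hZV, hAZ, hYZ⟩ := (subset_H1verts_iff hAY hZ).2 ⟨hZforb, hZN⟩
  by_cases hL : L ⊆ Z
  · have hA : A ∉ Ignore D A Y L N := (pair_subset_H1verts (.inl rfl)).2
    have hY : Y ∉ Ignore D A Y L N := (pair_subset_H1verts (.inr rfl)).2
    rw [inducedOn_H1_eq hL, reachable_eliminate_iff (disjoint_left.2 fun z hz => (hZV hz).2) hA hY
      hYZ, ← dSep_pbd_iff_not_reachable_H0 hL hZ hAZ hYZ, and_iff_right hL]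
  · exact iff_of_false (mt (subset_of_not_reachable_H1 hLV (by simp [*]) (by simp [*])) hL)
      fun h => hL h.1

lemma MinimalGAC.subset_ancAYL (h : MinimalGAC D A Y L N Z) : Z ⊆ ancAYL D A Y L := by
  by_contra hZ
  exact h.2 _ (inter_ssubset_left_iff.2 hZ) h.1.inter_ancAYL

end AdjustmentCriterion

theorem stmt4_general {V : Type*} {D : V → V → Prop} [Std.Asymm D] {A Y : V} {L N Z : Set V}
    (hAY : ReflTransGen D A Y) (hLforb : L ∩ forb D A Y = ∅) (hLN : L ⊆ N) :
    MinimalGAC D A Y L N Z ↔ MinimalCut (H1verts D A Y L N) (H1 D A Y L N) A Y Z := by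
  have hiff (hZ : Z ⊆ ancAYL D A Y L) :
      MinimalGAC D A Y L N Z ↔ MinimalCut (H1verts D A Y L N) (H1 D A Y L N) A Y Z :=
    and_congr (isCut_H1_iff_gAC hAY hLforb hLN hZ).symm <| forall₂_congr fun _ hZ' =>
      not_congr (isCut_H1_iff_gAC hAY hLforb hLN (hZ'.subset.trans hZ)).symm
  exact ⟨fun h => (hiff h.subset_ancAYL).1 h, fun h => (hiff (h.1.1.trans sdiff_subset)).2 h⟩

/-- Part 3 of Lemma 5 (statement 4): `Z` is a minimal set satisfying the graphical
adjustment criterion iff `Z` is a minimal `A`–`Y` cut in `H¹`. -/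
theorem stmt4 {V : Type*} [Fintype V] [DecidableEq V]
    (D : V → V → Prop) (hacy : Acyclic D)
    (A Y : V) (L N : Set V)
    (hAY : A ≠ Y) (hAancY : Relation.ReflTransGen D A Y)
    (hLnd : L ∩ desc D {A} = ∅) (hLY : Y ∉ L)
    (hN : {A, Y} ∪ L ⊆ N)
    (Z : Set V) :
    MinimalGAC D A Y L N Z ↔ MinimalCut (H1verts D A Y L N) (H1 D A Y L N) A Y Z := by
  have := hacy.asymm
  exact stmt4_general hAancY
    (subset_empty_iff.1 (hLnd ▸ inter_subset_inter_right L forb_subset_desc))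
    (subset_union_right.trans hN)

end CausalGraph
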